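/- arXiv:1801.03340 — 7 statements merged into one kernel-verified Lean document; each statement's English description precedes it below -/
import Mathlib

section
/- For the ferromagnetic nearest-neighbor Ising model on the rooted Cayley tree in which every vertex has exactly d children (d ≥ 2), at the critical inverse temperature β = β_c = arctanh(1/d) there exist constants c, C > 0 such that for all integers n ≥ 1 the root magnetization with plus boundary condition satisfies c·n^{-1/2} < ⟨σ_0⟩_n^+ < C·n^{-1/2}; that is, the critical 1-arm exponent equals 1/2. -/
/-!
Ising model on the rooted Cayley tree in which every vertex has exactly `d` children.
Vertices at generation `k ≤ n` are encoded as words of length `k` over `Fin d`.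
-/

/-- Vertices of the rooted `d`-ary tree of height `n`: a vertex at generation `k`
is a function `Fin k → Fin d` (a word of length `k`). -/
def TreeVtx (d n : ℕ) : Type := Σ k : Fin (n + 1), Fin (k : ℕ) → Fin d

instance (d n : ℕ) : Fintype (TreeVtx d n) :=
  inferInstanceAs (Fintype (Σ k : Fin (n + 1), Fin (k : ℕ) → Fin d))

instance (d n : ℕ) : DecidableEq (TreeVtx d n) :=
  inferInstanceAs (DecidableEq (Σ k : Fin (n + 1), Fin (k : ℕ) → Fin d))

/-- Spin configurations on the finite volume `V_n`. -/
def Config (d n : ℕ) : Type := TreeVtx d n → Bool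

instance (d n : ℕ) : Fintype (Config d n) :=
  inferInstanceAs (Fintype (TreeVtx d n → Bool))

/-- The spin value `±1` associated to a Boolean. -/
def spin (b : Bool) : ℝ := if b then 1 else -1

/-- The root of the tree. -/
def treeRoot (d n : ℕ) : TreeVtx d n := ⟨0, fun i => i.elim0⟩

/-- The Hamiltonian with plus boundary condition on the volume `V_n`:
`H_n^+(σ) = −Σ_{{x,y}∈L_n} σ_x σ_y − Σ_{x∈W_n} d·σ_x`, where the edges of `L_n`
are the parent–child pairs within `V_n`, and each vertex of the boundary
generation `W_n` has its `d` children frozen to `+1`. -/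
noncomputable def hamiltonianPlus (d n : ℕ) (σ : Config d n) : ℝ :=
  -(∑ k : Fin n, ∑ f : Fin ((k : ℕ) + 1) → Fin d,
      spin (σ ⟨k.succ, f⟩) * spin (σ ⟨k.castSucc, fun i => f i.castSucc⟩))
    - ∑ f : Fin n → Fin d, (d : ℝ) * spin (σ ⟨Fin.last n, f⟩)

/-- The root magnetization `⟨σ_0⟩_n^+` at inverse temperature `β`:
the expectation of the root spin under the Gibbs measure
`μ_n^+(σ) = e^{−β H_n^+(σ)} / Z_n^+`. -/
noncomputable def rootMagnetization (d n : ℕ) (β : ℝ) : ℝ :=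
  (∑ σ : Config d n, spin (σ (treeRoot d n)) * Real.exp (-β * hamiltonianPlus d n σ)) /
    ∑ σ : Config d n, Real.exp (-β * hamiltonianPlus d n σ)


/-- The critical inverse temperature `β_c = arctanh (1/d) = (1/2)·log((d+1)/(d−1))`. -/
noncomputable def betaCrit (d : ℕ) : ℝ := (1 / 2) * Real.log (((d : ℝ) + 1) / ((d : ℝ) - 1))

section TreeRecursion

variable {d : ℕ}

/-- The Gibbs weight on `V_n` in which every vertex of `W_n` carries the extra one-spin
weight `w`. -/
noncomputable def leafWeight (d n : ℕ) (β : ℝ) (w : Bool → ℝ) (σ : Config d n) : ℝ :=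
  Real.exp (β * ∑ k : Fin n, ∑ f : Fin ((k : ℕ) + 1) → Fin d,
      spin (σ ⟨k.succ, f⟩) * spin (σ ⟨k.castSucc, fun i => f i.castSucc⟩)) *
    ∏ f : Fin n → Fin d, w (σ ⟨Fin.last n, f⟩)

/-- The one-spin weight induced on a vertex by summing out `d` children, each of weight `w`. -/
noncomputable def childSum (d : ℕ) (β : ℝ) (w : Bool → ℝ) (s : Bool) : ℝ :=
  (∑ t : Bool, Real.exp (β * (spin t * spin s)) * w t) ^ d

/-- The magnetization of a single spin with weight `w`. -/
noncomputable def spinMean (w : Bool → ℝ) : ℝ := (w true - w false) / (w true + w false)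

/-- A configuration on `V_{n+1}` is a configuration on `V_n` together with the spins of
`W_{n+1}`. -/
def configSuccEquiv (d n : ℕ) : Config d (n + 1) ≃ Config d n × ((Fin (n + 1) → Fin d) → Bool) where
  toFun σ := (fun v => σ ⟨v.1.castSucc, v.2⟩, fun f => σ ⟨Fin.last (n + 1), f⟩)
  invFun p := fun v =>
    Fin.lastCases (motive := fun k : Fin (n + 2) => (Fin (k : ℕ) → Fin d) → Bool)
      p.2 (fun k f => p.1 ⟨k, f⟩) v.1 v.2
  left_inv σ := by
    funext ⟨k, f⟩
    induction k using Fin.lastCases with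
    | last => simp
    | cast k => simp
  right_inv p := by
    refine Prod.ext ?_ ?_
    · funext v
      simp only [Fin.lastCases_castSucc]
      rfl
    · funext f
      simp

theorem prod_words_succ {M : Type*} [CommMonoid M] (n : ℕ) (g : (Fin n → Fin d) → M) :
    ∏ f : Fin (n + 1) → Fin d, g (fun i => f i.castSucc) = ∏ f : Fin n → Fin d, g f ^ d := by
  rw [← (Fin.snocEquiv fun _ : Fin (n + 1) => Fin d).prod_comp, Fintype.prod_prod_type_right]
  refine Finset.prod_congr rfl fun f _ => ?_
  simp [Fin.snocEquiv]

theorem leafWeight_succ (n : ℕ) (β : ℝ) (w : Bool → ℝ) (σ : Config d (n + 1)) :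
    leafWeight d (n + 1) β w σ =
      Real.exp (β * ∑ k : Fin n, ∑ f : Fin ((k : ℕ) + 1) → Fin d,
        spin ((configSuccEquiv d n σ).1 ⟨k.succ, f⟩) *
          spin ((configSuccEquiv d n σ).1 ⟨k.castSucc, fun i => f i.castSucc⟩)) *
      ∏ f : Fin (n + 1) → Fin d,
        (Real.exp (β * (spin ((configSuccEquiv d n σ).2 f) *
          spin ((configSuccEquiv d n σ).1 ⟨Fin.last n, fun i => f i.castSucc⟩))) *
          w ((configSuccEquiv d n σ).2 f)) := by
  rw [leafWeight, Fin.sum_univ_castSucc, mul_add, Real.exp_add, Finset.prod_mul_distrib,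
    ← Real.exp_sum, ← Finset.mul_sum, mul_assoc]
  rfl

theorem sum_leafWeight_succ (n : ℕ) (β : ℝ) (w φ : Bool → ℝ) :
    ∑ σ : Config d (n + 1), φ (σ (treeRoot d (n + 1))) * leafWeight d (n + 1) β w σ =
      ∑ σ : Config d n, φ (σ (treeRoot d n)) * leafWeight d n β (childSum d β w) σ := by
  have hroot (σ : Config d (n + 1)) :
      σ (treeRoot d (n + 1)) = (configSuccEquiv d n σ).1 (treeRoot d n) := rfl
  simp only [leafWeight_succ, hroot]
  rw [(configSuccEquiv d n).sum_comp (fun p => φ (p.1 (treeRoot d n)) *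
      (Real.exp (β * ∑ k : Fin n, ∑ f : Fin ((k : ℕ) + 1) → Fin d,
        spin (p.1 ⟨k.succ, f⟩) * spin (p.1 ⟨k.castSucc, fun i => f i.castSucc⟩)) *
      ∏ f : Fin (n + 1) → Fin d,
        (Real.exp (β * (spin (p.2 f) * spin (p.1 ⟨Fin.last n, fun i => f i.castSucc⟩))) *
          w (p.2 f)))), Fintype.sum_prod_type]
  refine Finset.sum_congr rfl fun σ _ => ?_
  dsimp only
  rw [← Finset.mul_sum, ← Finset.mul_sum, leafWeight, ← Fintype.prod_sum
    (fun (f : Fin (n + 1) → Fin d) (t : Bool) =>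
      Real.exp (β * (spin t * spin (σ ⟨Fin.last n, fun i => f i.castSucc⟩))) * w t)]
  exact congrArg (fun z => φ (σ (treeRoot d n)) * (Real.exp _ * z))
    (prod_words_succ n fun f : Fin n → Fin d =>
      ∑ t : Bool, Real.exp (β * (spin t * spin (σ ⟨Fin.last n, f⟩))) * w t)

theorem sum_leafWeight_zero (β : ℝ) (w φ : Bool → ℝ) :
    ∑ σ : Config d 0, φ (σ (treeRoot d 0)) * leafWeight d 0 β w σ = ∑ b : Bool, φ b * w b := by
  let e : Config d 0 ≃ Bool :=
    { toFun := fun σ => σ (treeRoot d 0)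
      invFun := fun b _ => b
      left_inv := fun σ => by
        funext ⟨k, f⟩
        obtain rfl : k = 0 := Fin.fin_one_eq_zero k
        exact congrArg σ (congrArg (Sigma.mk 0) (funext fun i => i.elim0))
      right_inv := fun b => rfl }
  rw [← e.sum_comp]
  refine Finset.sum_congr rfl fun σ _ => ?_
  have hleaf : ∏ f : Fin 0 → Fin d, w (σ ⟨Fin.last 0, f⟩) = w (e σ) := by
    rw [Fintype.prod_unique]
    exact congrArg (fun f => w (σ ⟨Fin.last 0, f⟩)) (funext fun i => i.elim0)
  rw [leafWeight, hleaf, Fin.sum_univ_zero, mul_zero, Real.exp_zero, one_mul]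
  rfl

theorem sum_leafWeight (n : ℕ) (β : ℝ) (w φ : Bool → ℝ) :
    ∑ σ : Config d n, φ (σ (treeRoot d n)) * leafWeight d n β w σ =
      ∑ b : Bool, φ b * (childSum d β)^[n] w b := by
  induction n generalizing w with
  | zero => exact sum_leafWeight_zero β w φ
  | succ n ih => rw [sum_leafWeight_succ, ih, Function.iterate_succ_apply]

theorem exp_hamiltonianPlus (n : ℕ) (β : ℝ) (σ : Config d n) :
    Real.exp (-β * hamiltonianPlus d n σ) =
      leafWeight d n β (childSum d β fun b => if b then 1 else 0) σ := by
  have hw (s : Bool) : childSum d β (fun b => if b then 1 else 0) s =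
      Real.exp (β * (d * spin s)) := by
    simp only [childSum, Fintype.sum_bool, if_true, Bool.false_eq_true, if_false, mul_one,
      mul_zero, add_zero, ← Real.exp_nat_mul]
    congr 1
    simp only [spin, if_true]
    ring
  simp only [leafWeight, hw]
  rw [← Real.exp_sum, ← Real.exp_add, ← Finset.mul_sum, hamiltonianPlus]
  congr 1
  ring

theorem rootMagnetization_eq_spinMean (d n : ℕ) (β : ℝ) :
    rootMagnetization d n β =
      spinMean ((childSum d β)^[n + 1] fun b => if b then 1 else 0) := by
  have hnum := sum_leafWeight (d := d) n β (childSum d β fun b => if b then 1 else 0) spin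
  have hden := sum_leafWeight (d := d) n β (childSum d β fun b => if b then 1 else 0) 1
  simp only [Pi.one_apply, one_mul] at hden
  simp only [rootMagnetization, exp_hamiltonianPlus, hnum, hden, spinMean,
    Function.iterate_succ_apply, Fintype.sum_bool]
  simp [spin, sub_eq_add_neg]

end TreeRecursion

section CriticalMap

/-- The critical recursion map `m ↦ tanh (d · artanh (m / d))` for the magnetization. -/
noncomputable def critMap (d : ℕ) (m : ℝ) : ℝ :=
  ((1 + m / d) ^ d - (1 - m / d) ^ d) / ((1 + m / d) ^ d + (1 - m / d) ^ d)

theorem exp_betaCrit_mul {d : ℕ} (hd : 2 ≤ d) :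
    Real.exp (betaCrit d) * ((d : ℝ) - 1) = Real.exp (-betaCrit d) * ((d : ℝ) + 1) := by
  have hd' : (2 : ℝ) ≤ d := by exact_mod_cast hd
  have h1 : (0 : ℝ) < d - 1 := by linarith
  have h2 : (0 : ℝ) < d + 1 := by linarith
  have h : Real.exp (betaCrit d) * Real.exp (betaCrit d) = ((d : ℝ) + 1) / (d - 1) := by
    rw [← Real.exp_add, ← Real.exp_log (div_pos h2 h1), betaCrit]
    congr 1
    ring
  rw [eq_div_iff h1.ne'] at h
  rw [Real.exp_neg, ← h]
  field_simp

theorem spinMean_childSum {d : ℕ} (hd : 2 ≤ d) (w : Bool → ℝ) (hw : 0 < w true + w false) :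
    spinMean (childSum d (betaCrit d) w) = critMap d (spinMean w) := by
  have hd' : (2 : ℝ) ≤ d := by exact_mod_cast hd
  have h1 : (0 : ℝ) < d - 1 := by linarith
  have h0 : (0 : ℝ) < d := by linarith
  have he := exp_betaCrit_mul hd
  have hneg := Real.exp_pos (-betaCrit d)
  set κ := Real.exp (-betaCrit d) * (w true + w false) * d / (d - 1) with hκ
  have hκ0 : 0 < κ := by positivity
  have he' : Real.exp (betaCrit d) = Real.exp (-betaCrit d) * ((d : ℝ) + 1) / (d - 1) := by
    rw [eq_div_iff h1.ne', he]
  have htrue : childSum d (betaCrit d) w true = κ ^ d * (1 + spinMean w / d) ^ d := by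
    rw [← mul_pow, childSum, Fintype.sum_bool]
    congr 1
    simp only [spin, if_true, Bool.false_eq_true, if_false, mul_one, mul_neg, he', hκ, spinMean]
    field_simp
    ring
  have hfalse : childSum d (betaCrit d) w false = κ ^ d * (1 - spinMean w / d) ^ d := by
    rw [← mul_pow, childSum, Fintype.sum_bool]
    congr 1
    simp only [spin, if_true, Bool.false_eq_true, if_false, mul_one, mul_neg, neg_neg, he', hκ,
      spinMean]
    field_simp
    ring
  rw [spinMean, htrue, hfalse, critMap, ← mul_sub, ← mul_add,
    mul_div_mul_left _ _ (pow_pos hκ0 d).ne']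

theorem childSum_pos (d : ℕ) (β : ℝ) {w : Bool → ℝ} (h : ∀ b, 0 ≤ w b)
    (hw : 0 < w true + w false) (s : Bool) : 0 < childSum d β w s := by
  refine pow_pos ?_ d
  rw [Fintype.sum_bool]
  have h1 := Real.exp_pos (β * (spin true * spin s))
  have h2 := Real.exp_pos (β * (spin false * spin s))
  rcases (h true).lt_or_eq with ht | ht
  · exact add_pos_of_pos_of_nonneg (mul_pos h1 ht) (mul_nonneg h2.le (h false))
  · rw [← ht, zero_add] at hw
    exact add_pos_of_nonneg_of_pos (mul_nonneg h1.le (h true)) (mul_pos h2 hw)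

theorem rootMagnetization_betaCrit {d : ℕ} (hd : 2 ≤ d) (n : ℕ) :
    rootMagnetization d n (betaCrit d) = (critMap d)^[n + 1] 1 := by
  rw [rootMagnetization_eq_spinMean]
  have key (k : ℕ) (w : Bool → ℝ) (h : ∀ b, 0 ≤ w b) (hw : 0 < w true + w false) :
      spinMean ((childSum d (betaCrit d))^[k] w) = (critMap d)^[k] (spinMean w) := by
    induction k generalizing w with
    | zero => rfl
    | succ k ih =>
      have hpos := childSum_pos d (betaCrit d) h hw
      rw [Function.iterate_succ_apply, Function.iterate_succ_apply,
        ih _ (fun b => (hpos b).le) (add_pos (hpos _) (hpos _)), spinMean_childSum hd w hw]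
  rw [key _ _ (by simp) (by simp)]
  simp [spinMean]

theorem two_le_add_pow (k : ℕ) {x : ℝ} (hx0 : 0 ≤ x) (hx1 : x ≤ 1) :
    2 ≤ (1 + x) ^ k + (1 - x) ^ k := by
  have h1 := one_add_mul_le_pow (a := x) (by linarith) k
  have h2 := one_add_mul_le_pow (a := -x) (by linarith) k
  rw [← sub_eq_add_neg] at h2
  linarith

theorem two_mul_le_sub_pow (k : ℕ) {x : ℝ} (hx0 : 0 ≤ x) (hx1 : x ≤ 1) :
    2 * (k * x) ≤ (1 + x) ^ k - (1 - x) ^ k := by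
  induction k with
  | zero => simp
  | succ k ih =>
    have h := mul_le_mul_of_nonneg_left (two_le_add_pow k hx0 hx1) hx0
    push_cast
    rw [pow_succ, pow_succ]
    linarith

theorem sub_pow_le_mul_add_pow (k : ℕ) {x : ℝ} (hx0 : 0 ≤ x) (hx1 : x ≤ 1) :
    (1 + x) ^ k - (1 - x) ^ k ≤ k * x * ((1 + x) ^ k + (1 - x) ^ k) := by
  induction k with
  | zero => simp
  | succ k ih =>
    have hk : (0 : ℝ) ≤ k := k.cast_nonneg
    have hD := two_mul_le_sub_pow k hx0 hx1
    have hD0 : 0 ≤ (1 + x) ^ k - (1 - x) ^ k := le_trans (by positivity) hD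
    have h := mul_nonneg (mul_nonneg hk (sq_nonneg x)) hD0
    have h' := mul_nonneg (sq_nonneg x) hD0
    push_cast
    rw [pow_succ, pow_succ]
    linarith

theorem sub_pow_mul_le (k : ℕ) {x : ℝ} (hx0 : 0 ≤ x) (hx1 : x ≤ 1) :
    ((1 + x) ^ (k + 1) - (1 - x) ^ (k + 1)) * (1 + k * x ^ 2) ≤
      (k + 1) * x * ((1 + x) ^ (k + 1) + (1 - x) ^ (k + 1)) := by
  have h := sub_pow_le_mul_add_pow k hx0 hx1
  have h' := mul_le_mul_of_nonneg_right h (sub_nonneg.2 (pow_le_one₀ (n := 2) hx0 hx1))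
  rw [pow_succ, pow_succ]
  linarith

theorem exists_pow_le (k : ℕ) : ∃ K : ℝ, 0 ≤ K ∧ ∀ x : ℝ, |x| ≤ 1 →
    (1 + x) ^ k ≤ 1 + k * x + K * x ^ 2 := by
  induction k with
  | zero => exact ⟨0, le_rfl, fun x _ => by simp⟩
  | succ k ih =>
    obtain ⟨K, hK0, hK⟩ := ih
    refine ⟨2 * K + k, by positivity, fun x hx => ?_⟩
    obtain ⟨hx1, hx2⟩ := abs_le.1 hx
    have h := mul_le_mul_of_nonneg_right (hK x hx) (by linarith : 0 ≤ 1 + x)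
    have h' := mul_nonneg (mul_nonneg hK0 (sq_nonneg x)) (sub_nonneg.2 hx2)
    push_cast
    rw [pow_succ]
    linarith

theorem critMap_pos {d : ℕ} (hd : 2 ≤ d) {m : ℝ} (hm0 : 0 < m) (hm1 : m ≤ 1) :
    0 < critMap d m := by
  have hd' : (2 : ℝ) ≤ d := by exact_mod_cast hd
  have hx0 : 0 < m / d := by positivity
  have hx1 : m / d ≤ 1 := by rw [div_le_one (by linarith)]; linarith
  refine div_pos ?_ (lt_of_lt_of_le two_pos (two_le_add_pow d hx0.le hx1))
  exact lt_of_lt_of_le (by positivity) (two_mul_le_sub_pow d hx0.le hx1)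

theorem critMap_le {d : ℕ} (hd : 2 ≤ d) {m : ℝ} (hm0 : 0 < m) (hm1 : m ≤ 1) :
    critMap d m ≤ m / (1 + ((d : ℝ) - 1) / d ^ 2 * m ^ 2) := by
  have hd' : (2 : ℝ) ≤ d := by exact_mod_cast hd
  have hx0 : 0 < m / d := by positivity
  have hx1 : m / d ≤ 1 := by rw [div_le_one (by linarith)]; linarith
  have h := sub_pow_mul_le (d - 1) hx0.le hx1
  rw [Nat.sub_add_cancel (by omega), Nat.cast_sub (by omega), Nat.cast_one, sub_add_cancel,
    mul_div_cancel₀ m (by linarith : (d : ℝ) ≠ 0)] at h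
  have ha : 0 ≤ ((d : ℝ) - 1) / d ^ 2 := div_nonneg (by linarith) (sq_nonneg _)
  rw [critMap, div_le_div_iff₀ (lt_of_lt_of_le two_pos (two_le_add_pow d hx0.le hx1))
    (by positivity)]
  rwa [div_mul_eq_mul_div, mul_div_assoc, ← div_pow]

theorem exists_le_critMap {d : ℕ} (hd : 2 ≤ d) : ∃ K : ℝ, 0 ≤ K ∧ ∀ m : ℝ, 0 < m → m ≤ 1 →
    m / (1 + K * m ^ 2) ≤ critMap d m := by
  have hd' : (2 : ℝ) ≤ d := by exact_mod_cast hd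
  obtain ⟨K, hK0, hK⟩ := exists_pow_le d
  refine ⟨K / d ^ 2, by positivity, fun m hm0 hm1 => ?_⟩
  have hx0 : 0 < m / d := by positivity
  have hx1 : m / d ≤ 1 := by rw [div_le_one (by linarith)]; linarith
  have hD := two_mul_le_sub_pow d hx0.le hx1
  have hp := hK (m / d) (by rwa [abs_of_pos hx0])
  have hn := hK (-(m / d)) (by rwa [abs_neg, abs_of_pos hx0])
  rw [← sub_eq_add_neg] at hn
  have hS : (1 + m / d) ^ d + (1 - m / d) ^ d ≤ 2 * (1 + K / d ^ 2 * m ^ 2) := by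
    have : K / d ^ 2 * m ^ 2 = K * (m / d) ^ 2 := by rw [div_pow]; ring
    rw [this]
    linarith
  rw [mul_div_cancel₀ m (by linarith : (d : ℝ) ≠ 0)] at hD
  have h2 := two_le_add_pow d hx0.le hx1
  rw [critMap, div_le_div_iff₀ (by positivity) (by linarith)]
  calc m * ((1 + m / d) ^ d + (1 - m / d) ^ d)
      ≤ m * (2 * (1 + K / d ^ 2 * m ^ 2)) := mul_le_mul_of_nonneg_left hS hm0.le
    _ = 2 * m * (1 + K / d ^ 2 * m ^ 2) := by ring
    _ ≤ _ := mul_le_mul_of_nonneg_right hD (by positivity)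

theorem iterate_critMap_mem {d : ℕ} (hd : 2 ≤ d) (n : ℕ) :
    0 < (critMap d)^[n] 1 ∧ (critMap d)^[n] 1 ≤ 1 := by
  have hd' : (2 : ℝ) ≤ d := by exact_mod_cast hd
  induction n with
  | zero => simp
  | succ n ih =>
    rw [Function.iterate_succ_apply']
    refine ⟨critMap_pos hd ih.1 ih.2, (critMap_le hd ih.1 ih.2).trans ?_⟩
    have ha : 0 ≤ ((d : ℝ) - 1) / d ^ 2 := div_nonneg (by linarith) (sq_nonneg _)
    exact div_le_one_of_le₀ (ih.2.trans (le_add_of_nonneg_right (mul_nonneg ha (sq_nonneg _))))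
      (by positivity)

theorem le_inv_sq_iterate {d : ℕ} (hd : 2 ≤ d) (n : ℕ) :
    1 + 2 * (((d : ℝ) - 1) / d ^ 2) * n ≤ (((critMap d)^[n] 1) ^ 2)⁻¹ := by
  have hd' : (2 : ℝ) ≤ d := by exact_mod_cast hd
  have ha : 0 ≤ ((d : ℝ) - 1) / d ^ 2 := div_nonneg (by linarith) (sq_nonneg _)
  induction n with
  | zero => simp
  | succ n ih =>
    obtain ⟨hm0, hm1⟩ := iterate_critMap_mem hd n
    rw [Function.iterate_succ_apply']
    set m := (critMap d)^[n] 1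
    set a := ((d : ℝ) - 1) / d ^ 2
    have hf0 := critMap_pos hd hm0 hm1
    calc 1 + 2 * a * ((n + 1 : ℕ) : ℝ) = 1 + 2 * a * n + 2 * a := by push_cast; ring
      _ ≤ (m ^ 2)⁻¹ + 2 * a + a ^ 2 * m ^ 2 := by nlinarith [mul_nonneg (sq_nonneg a) (sq_nonneg m)]
      _ = ((m / (1 + a * m ^ 2)) ^ 2)⁻¹ := by field_simp; ring
      _ ≤ (critMap d m ^ 2)⁻¹ :=
        inv_anti₀ (pow_pos hf0 2) (pow_le_pow_left₀ hf0.le (critMap_le hd hm0 hm1) 2)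

theorem exists_inv_sq_iterate_le {d : ℕ} (hd : 2 ≤ d) : ∃ K : ℝ, 0 ≤ K ∧ ∀ n : ℕ,
    (((critMap d)^[n] 1) ^ 2)⁻¹ ≤ 1 + K * n := by
  obtain ⟨K, hK0, hK⟩ := exists_le_critMap hd
  refine ⟨2 * K + K ^ 2, by positivity, fun n => ?_⟩
  induction n with
  | zero => simp
  | succ n ih =>
    obtain ⟨hm0, hm1⟩ := iterate_critMap_mem hd n
    rw [Function.iterate_succ_apply']
    set m := (critMap d)^[n] 1
    calc (critMap d m ^ 2)⁻¹ ≤ ((m / (1 + K * m ^ 2)) ^ 2)⁻¹ :=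
        inv_anti₀ (by positivity) (pow_le_pow_left₀ (by positivity) (hK m hm0 hm1) 2)
      _ = (m ^ 2)⁻¹ + 2 * K + K ^ 2 * m ^ 2 := by field_simp; ring
      _ ≤ 1 + (2 * K + K ^ 2) * n + 2 * K + K ^ 2 := by
        have := mul_le_mul_of_nonneg_left (pow_le_one₀ (n := 2) hm0.le hm1) (sq_nonneg K)
        linarith
      _ = 1 + (2 * K + K ^ 2) * ((n + 1 : ℕ) : ℝ) := by push_cast; ring

end CriticalMap

/-- **The critical 1-arm exponent for the Ising model on the rooted Cayley tree is 1/2**: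
at the critical inverse temperature `β_c = arctanh (1/d)` there are constants
`c, C > 0` with `c·n^{-1/2} < ⟨σ_0⟩_n^+ < C·n^{-1/2}` for all `n ≥ 1`. -/
theorem critical_one_arm_exponent (d : ℕ) (hd : 2 ≤ d) :
    ∃ c C : ℝ, 0 < c ∧ 0 < C ∧ ∀ n : ℕ, 1 ≤ n →
      c * (n : ℝ) ^ (-(1 / 2 : ℝ)) < rootMagnetization d n (betaCrit d) ∧
        rootMagnetization d n (betaCrit d) < C * (n : ℝ) ^ (-(1 / 2 : ℝ)) := by
  have hd' : (2 : ℝ) ≤ d := by exact_mod_cast hd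
  obtain ⟨K, hK0, hK⟩ := exists_inv_sq_iterate_le hd
  set a := ((d : ℝ) - 1) / d ^ 2 with ha_def
  have ha : 0 < a := div_pos (by linarith) (by positivity)
  refine ⟨(√(2 + 2 * K))⁻¹, (√(2 * a))⁻¹, by positivity, by positivity, fun n hn => ?_⟩
  have hn' : (1 : ℝ) ≤ n := by exact_mod_cast hn
  have hlow := le_inv_sq_iterate hd (n + 1)
  have hup := hK (n + 1)
  obtain ⟨hm0, -⟩ := iterate_critMap_mem hd (n + 1)
  rw [rootMagnetization_betaCrit hd, Real.rpow_neg n.cast_nonneg, ← Real.sqrt_eq_rpow, ← mul_inv,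
    ← mul_inv, ← Real.sqrt_mul (by positivity), ← Real.sqrt_mul (by positivity)]
  set m := (critMap d)^[n + 1] 1
  rw [← ha_def] at hlow
  push_cast at hlow hup
  rw [← inv_pow] at hlow hup
  constructor
  · rw [inv_lt_comm₀ (by positivity) hm0]
    exact Real.lt_sqrt_of_sq_lt (by nlinarith)
  · rw [lt_inv_comm₀ hm0 (by positivity), Real.sqrt_lt' (by positivity)]
    nlinarith
end

section
/- For every integer d ≥ 2, at the critical inverse temperature β = β_c = arctanh(1/d), the recursively defined ratio satisfies, for all integers n ≥ 1, the two-sided bound 1 − (1 − y_0/x_0)·n^{-1/2} ≥ y_{n−1}/x_{n−1} ≥ 1 − (√6·d/√(d²−1))·n^{-1/2}. -/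
/-- The pair of recursively defined sequences `(x_n, y_n)`:
`x_0 = (e^{β(d+1)} + e^{−β(d+1)})^d`, `y_0 = (e^{β(d−1)} + e^{−β(d−1)})^d`, and
`x_n = (e^β x_{n−1} + e^{−β} y_{n−1})^d`, `y_n = (e^β y_{n−1} + e^{−β} x_{n−1})^d`. -/
noncomputable def xy (β : ℝ) (d : ℕ) : ℕ → ℝ × ℝ
  | 0 => ((Real.exp (β * ((d : ℝ) + 1)) + Real.exp (-β * ((d : ℝ) + 1))) ^ d,
          (Real.exp (β * ((d : ℝ) - 1)) + Real.exp (-β * ((d : ℝ) - 1))) ^ d)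
  | n + 1 => ((Real.exp β * (xy β d n).1 + Real.exp (-β) * (xy β d n).2) ^ d,
              (Real.exp β * (xy β d n).2 + Real.exp (-β) * (xy β d n).1) ^ d)

/-- The upper bound on `tanh (k · artanh s)` given by truncating its continued fraction after
three terms, written with `tanh (k · artanh s) = ((1+s)^k - (1-s)^k) / ((1+s)^k + (1-s)^k)`. -/
theorem one_add_pow_sub_one_sub_pow_mul_le {k : ℕ} (hk : 1 ≤ k) {s : ℝ} (hs : 0 < s)
    (hks : k * s ≤ 1) :
    ((1 + s) ^ k - (1 - s) ^ k) * (15 + (6 * (k : ℝ) ^ 2 - 9) * s ^ 2) ≤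
      ((1 + s) ^ k + (1 - s) ^ k) * (k * s * (15 + ((k : ℝ) ^ 2 - 4) * s ^ 2)) := by
  induction k, hk using Nat.le_induction with
  | base => norm_num; nlinarith
  | succ k hk ih =>
    push_cast at hks ⊢
    have hk1 : (1 : ℝ) ≤ k := by exact_mod_cast hk
    have hs1 : s ≤ 1 / 2 := by nlinarith
    have ih := ih (by nlinarith)
    have hB : 0 < (1 - s) ^ k := by apply pow_pos; linarith
    have hAB : (1 - s) ^ k ≤ (1 + s) ^ k := pow_le_pow_left₀ (by linarith) (by linarith) k
    rw [pow_succ, pow_succ]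
    generalize (1 + s) ^ k = A at *
    generalize (1 - s) ^ k = B at *
    have hs2 : s ^ 2 ≤ 1 / 4 := by nlinarith
    have hD : 0 < 15 + (6 * (k : ℝ) ^ 2 - 9) * s ^ 2 := by
      nlinarith [mul_nonneg (sq_nonneg (k : ℝ)) (sq_nonneg s)]
    have hcoef : 0 ≤ 15 + (6 * ((k : ℝ) + 1) ^ 2 - 9) * s ^ 2 -
        s * ((k + 1) * s * (15 + (((k : ℝ) + 1) ^ 2 - 4) * s ^ 2)) := by
      have h0 : 0 ≤ (((k : ℝ) + 1) ^ 2 - 4) * s ^ 2 := mul_nonneg (by nlinarith) (sq_nonneg s)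
      have h1 : (k + 1) * s * (15 + (((k : ℝ) + 1) ^ 2 - 4) * s ^ 2) ≤
          15 + (((k : ℝ) + 1) ^ 2 - 4) * s ^ 2 := mul_le_of_le_one_left (by linarith) hks
      have h2 : s * ((k + 1) * s * (15 + (((k : ℝ) + 1) ^ 2 - 4) * s ^ 2)) ≤
          (k + 1) * s * (15 + (((k : ℝ) + 1) ^ 2 - 4) * s ^ 2) :=
        mul_le_of_le_one_left (by positivity) (by linarith)
      nlinarith [sq_nonneg s, mul_nonneg (by nlinarith : 0 ≤ ((k : ℝ) + 1) ^ 2 - 1) (sq_nonneg s)]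
    have hk4 : 0 ≤ ((k : ℝ) ^ 2 - 4) * (k - 1) := by
      rcases hk.eq_or_lt with rfl | hk2
      · simp
      · have : (2 : ℝ) ≤ k := by exact_mod_cast hk2
        exact mul_nonneg (by nlinarith) (by linarith)
    have hrem : 0 ≤ (A + B) * (((k : ℝ) ^ 2 - 4) * (k - 1) * (k * (k + 1) * (k + 3) * s ^ 7)) :=
      mul_nonneg (by linarith) (mul_nonneg hk4 (by positivity))
    refine le_of_mul_le_mul_left ?_ hD
    linear_combination mul_le_mul_of_nonneg_right ih hcoef + hrem

/-- The lower bound on `tanh (k · artanh s)` given by truncating its continued fraction after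
two terms. -/
theorem mul_le_one_add_pow_sub_one_sub_pow_mul {k : ℕ} (hk : 1 ≤ k) {s : ℝ} (hs : 0 < s)
    (hs1 : s ≤ 1) :
    ((1 + s) ^ k + (1 - s) ^ k) * (3 * k * s) ≤
      ((1 + s) ^ k - (1 - s) ^ k) * (3 + ((k : ℝ) ^ 2 - 1) * s ^ 2) := by
  induction k, hk using Nat.le_induction with
  | base => norm_num; nlinarith
  | succ k hk ih =>
    push_cast
    have hk1 : (1 : ℝ) ≤ k := by exact_mod_cast hk
    have hA : 0 < (1 + s) ^ k := by positivity
    have hB : 0 ≤ (1 - s) ^ k := by apply pow_nonneg; linarith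
    rw [pow_succ, pow_succ]
    generalize (1 + s) ^ k = A at *
    generalize (1 - s) ^ k = B at *
    have hk2 : 0 ≤ (k : ℝ) ^ 2 - 1 := by nlinarith
    have hD : 0 < 3 + ((k : ℝ) ^ 2 - 1) * s ^ 2 := by positivity
    have hcoef : 0 ≤ 3 + (((k : ℝ) + 1) ^ 2 - 1) * s ^ 2 - s * (3 * (k + 1) * s) := by
      nlinarith [mul_nonneg (by nlinarith : 0 ≤ (k : ℝ) ^ 2 - k) (sq_nonneg s)]
    have hrem : 0 ≤ (A + B) * (((k : ℝ) ^ 2 - 1) * (k * (k + 2) * s ^ 5)) :=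
      mul_nonneg (by linarith) (mul_nonneg hk2 (by positivity))
    refine le_of_mul_le_mul_left ?_ hD
    linear_combination mul_le_mul_of_nonneg_right ih hcoef + hrem

/-- One step of the recursion for `w = coth h`, namely `h ↦ d · artanh (tanh h / d)`, increases
`(w + 1) ^ 2` by at least `2 (1 - 1 / d ^ 2) / 3` and at most `4`. -/
theorem coth_step_bounds {d : ℕ} (hd : 2 ≤ d) {w w' : ℝ} (hw : 1 < w)
    (hw' : w' * ((1 + 1 / (d * w)) ^ d - (1 - 1 / (d * w)) ^ d) =
      (1 + 1 / (d * w)) ^ d + (1 - 1 / (d * w)) ^ d) :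
    (w + 1) ^ 2 + 2 * ((d : ℝ) ^ 2 - 1) / (3 * (d : ℝ) ^ 2) ≤ (w' + 1) ^ 2 ∧
      (w' + 1) ^ 2 ≤ (w + 1) ^ 2 + 4 := by
  have hd2 : (2 : ℝ) ≤ d := by exact_mod_cast hd
  have hw0 : 0 < w := by linarith
  have hdw : 0 < d * w := by positivity
  have hs : 0 < 1 / (d * w) := by positivity
  have hds : d * (1 / (d * w)) ≤ 1 := by
    rw [mul_one_div, div_le_one hdw]; nlinarith
  have hs1 : 1 / (d * w) ≤ 1 := by nlinarith
  have hup := one_add_pow_sub_one_sub_pow_mul_le (by omega : 1 ≤ d) hs hds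
  have hlo := mul_le_one_add_pow_sub_one_sub_pow_mul (by omega : 1 ≤ d) hs hs1
  have hM : 0 < (1 + 1 / (d * w)) ^ d - (1 - 1 / (d * w)) ^ d :=
    sub_pos.2 (pow_lt_pow_left₀ (by linarith) (by linarith) (by omega))
  rw [← hw', mul_assoc, mul_left_comm] at hup hlo
  replace hup := le_of_mul_le_mul_left hup hM
  replace hlo := le_of_mul_le_mul_left hlo hM
  set e : ℝ := 1 / (d : ℝ) ^ 2 with he
  have he0 : 0 < e := by positivity
  have he1 : e ≤ 1 / 4 := by
    rw [he]; exact one_div_le_one_div_of_le (by norm_num) (by nlinarith)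
  have hc : 2 * ((d : ℝ) ^ 2 - 1) / (3 * (d : ℝ) ^ 2) = 2 / 3 * (1 - e) := by
    rw [he]; field_simp
  have hup' : w * (15 * w ^ 2 + 6 - 9 * e) ≤ w' * (15 * w ^ 2 + 1 - 4 * e) := by
    have h := mul_le_mul_of_nonneg_left hup (by positivity : 0 ≤ w ^ 3)
    refine (le_of_eq ?_).trans (h.trans (le_of_eq ?_)) <;> simp only [he] <;> field_simp <;> ring
  have hlo' : w' * (3 * w) ≤ 3 * w ^ 2 + 1 - e := by
    have h := mul_le_mul_of_nonneg_left hlo (by positivity : 0 ≤ w ^ 2)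
    refine (le_of_eq ?_).trans (h.trans (le_of_eq ?_))
    · field_simp
    · rw [he]
      field_simp
      ring
  have hE : 5 * (1 - e) * w ≤ (w' - w) * (15 * w ^ 2 + 1 - 4 * e) := by linarith
  have hE0 : 0 ≤ w' - w := by
    refine le_of_mul_le_mul_right (a := 15 * w ^ 2 + 1 - 4 * e) ?_ (by nlinarith)
    nlinarith
  rw [hc]
  constructor
  · have h1 : 1 / 3 * (1 - e) ≤ (w' - w) * (w + 1) := by
      refine le_of_mul_le_mul_right (a := 15 * w ^ 2 + 1 - 4 * e) ?_ (by nlinarith)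
      have h2 := mul_le_mul_of_nonneg_right hE (by linarith : 0 ≤ w + 1)
      have h3 : 0 ≤ (1 - e) * (15 * w - 1 + 4 * e) := mul_nonneg (by linarith) (by linarith)
      nlinarith
    nlinarith [sq_nonneg (w' - w)]
  · have h1 : w' - w ≤ 1 / 3 := by nlinarith
    have h2 : (w' - w) * w ≤ 1 / 3 := by nlinarith
    nlinarith

theorem exp_betaCrit_relation {d : ℕ} (hd : 2 ≤ d) :
    d * (Real.exp (betaCrit d) - Real.exp (-betaCrit d)) =
      Real.exp (betaCrit d) + Real.exp (-betaCrit d) := by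
  have hd2 : (2 : ℝ) ≤ d := by exact_mod_cast hd
  have h1 : Real.exp (betaCrit d) * Real.exp (betaCrit d) = ((d : ℝ) + 1) / (d - 1) := by
    rw [← Real.exp_add, betaCrit, ← Real.exp_log (div_pos (by linarith) (by linarith) :
      0 < ((d : ℝ) + 1) / (d - 1))]
    congr 1
    rw [Real.exp_log (div_pos (by linarith) (by linarith))]
    ring
  have h2 : (0 : ℝ) < d - 1 := by linarith
  rw [Real.exp_neg]
  have h0 := Real.exp_pos (betaCrit d)
  field_simp at h1 ⊢
  linarith

theorem betaCrit_pos {d : ℕ} (hd : 2 ≤ d) : 0 < betaCrit d := by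
  have hd2 : (2 : ℝ) ≤ d := by exact_mod_cast hd
  refine mul_pos (by norm_num) (Real.log_pos ?_)
  rw [lt_div_iff₀] <;> linarith

theorem xy_pos_lt {d : ℕ} (hd : 2 ≤ d) {β : ℝ} (hβ : 0 < β) (n : ℕ) :
    0 < (xy β d n).2 ∧ (xy β d n).2 < (xy β d n).1 := by
  have hd2 : (2 : ℝ) ≤ d := by exact_mod_cast hd
  induction n with
  | zero =>
    refine ⟨by simp only [xy]; positivity, ?_⟩
    refine pow_lt_pow_left₀ ?_ (by positivity) (by omega)
    have h : Real.cosh (β * ((d : ℝ) - 1)) < Real.cosh (β * ((d : ℝ) + 1)) := by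
      rw [Real.cosh_lt_cosh, abs_of_pos (by nlinarith), abs_of_pos (by positivity)]
      nlinarith
    rw [Real.cosh_eq, Real.cosh_eq] at h
    simp only [neg_mul]
    linarith
  | succ n ih =>
    obtain ⟨hy, hxy⟩ := ih
    refine ⟨by simp only [xy]; have := hy.trans hxy; positivity, ?_⟩
    have hx := hy.trans hxy
    refine pow_lt_pow_left₀ ?_ (by positivity) (by omega)
    have h : Real.exp (-β) < Real.exp β := Real.exp_lt_exp.2 (by linarith)
    nlinarith

/-- The ratio `(x_n + y_n) / (x_n - y_n)`, which is `coth h` when `y_n / x_n = e^{-2h}`. -/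
noncomputable def cothRatio (d n : ℕ) : ℝ :=
  ((xy (betaCrit d) d n).1 + (xy (betaCrit d) d n).2) /
    ((xy (betaCrit d) d n).1 - (xy (betaCrit d) d n).2)

theorem one_lt_cothRatio {d : ℕ} (hd : 2 ≤ d) (n : ℕ) : 1 < cothRatio d n := by
  obtain ⟨hy, hxy⟩ := xy_pos_lt hd (betaCrit_pos hd) n
  rw [cothRatio, lt_div_iff₀] <;> linarith

theorem one_sub_ratio_eq {d : ℕ} (hd : 2 ≤ d) (n : ℕ) :
    1 - (xy (betaCrit d) d n).2 / (xy (betaCrit d) d n).1 = 2 / (cothRatio d n + 1) := by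
  obtain ⟨hy, hxy⟩ := xy_pos_lt hd (betaCrit_pos hd) n
  have hx := hy.trans hxy
  have hsub := sub_pos.2 hxy
  have h : cothRatio d n + 1 = 2 * (xy (betaCrit d) d n).1 /
      ((xy (betaCrit d) d n).1 - (xy (betaCrit d) d n).2) := by
    rw [cothRatio]; field_simp; ring
  rw [h]
  field_simp

theorem cothRatio_succ {d : ℕ} (hd : 2 ≤ d) (n : ℕ) :
    cothRatio d (n + 1) *
        ((1 + 1 / (d * cothRatio d n)) ^ d - (1 - 1 / (d * cothRatio d n)) ^ d) =
      (1 + 1 / (d * cothRatio d n)) ^ d + (1 - 1 / (d * cothRatio d n)) ^ d := by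
  obtain ⟨hy, hxy⟩ := xy_pos_lt hd (betaCrit_pos hd) n
  have hlt := (xy_pos_lt hd (betaCrit_pos hd) (n + 1)).2
  have hrel := exp_betaCrit_relation hd
  have hp := Real.exp_pos (betaCrit d)
  have hq := Real.exp_pos (-betaCrit d)
  rw [cothRatio, cothRatio]
  simp only [xy] at hlt ⊢
  generalize (xy (betaCrit d) d n).1 = x at *
  generalize (xy (betaCrit d) d n).2 = y at *
  generalize Real.exp (betaCrit d) = p at *
  generalize Real.exp (-betaCrit d) = q at *
  have hd0 : (0 : ℝ) < d := by positivity
  have hx := hy.trans hxy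
  have hsub := sub_pos.2 hxy
  set s := 1 / (d * ((x + y) / (x - y))) with hs
  set a := (p + q) * (x + y) / 2 with ha
  have has : a * s = (p - q) * (x - y) / 2 := by
    rw [hs, ha]; field_simp; linear_combination (-1 : ℝ) * hrel
  have h1 : p * x + q * y = a * (1 + s) := by rw [mul_add, has, ha]; ring
  have h2 : p * y + q * x = a * (1 - s) := by rw [mul_sub, has, ha]; ring
  rw [h1, h2, mul_pow, mul_pow] at hlt ⊢
  have ha0 : 0 < a ^ d := by positivity
  have hne := sub_pos.2 (lt_of_mul_lt_mul_left hlt ha0.le)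
  rw [← mul_add, ← mul_sub, mul_div_mul_left _ _ ha0.ne', div_mul_cancel₀ _ hne.ne']

theorem cothRatio_add_one_sq_bounds {d : ℕ} (hd : 2 ≤ d) (n : ℕ) :
    ((n : ℝ) + 1) * (2 * ((d : ℝ) ^ 2 - 1) / (3 * (d : ℝ) ^ 2)) ≤ (cothRatio d n + 1) ^ 2 ∧
      (cothRatio d n + 1) ^ 2 ≤ ((n : ℝ) + 1) * (cothRatio d 0 + 1) ^ 2 := by
  have h0 := one_lt_cothRatio hd 0
  induction n with
  | zero =>
    have hd2 : (2 : ℝ) ≤ d := by exact_mod_cast hd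
    have : 2 * ((d : ℝ) ^ 2 - 1) / (3 * (d : ℝ) ^ 2) ≤ 1 := by
      rw [div_le_one (by positivity)]; nlinarith
    constructor <;> norm_num
    nlinarith
  | succ n ih =>
    have h := coth_step_bounds hd (one_lt_cothRatio hd n) (cothRatio_succ hd n)
    push_cast
    constructor
    · linarith [ih.1, h.1]
    · nlinarith [ih.2, h.2]

/-- **Main Lemma**: at the critical inverse temperature `β_c = arctanh(1/d)`, for all `n ≥ 1`,
`1 − (1 − y_0/x_0)·n^{-1/2} ≥ y_{n−1}/x_{n−1} ≥ 1 − (√6·d/√(d²−1))·n^{-1/2}`. -/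
theorem critical_ratio_bounds (d : ℕ) (hd : 2 ≤ d) (n : ℕ) (hn : 1 ≤ n) :
    1 - (1 - (xy (betaCrit d) d 0).2 / (xy (betaCrit d) d 0).1) / Real.sqrt n ≥
        (xy (betaCrit d) d (n - 1)).2 / (xy (betaCrit d) d (n - 1)).1 ∧
      (xy (betaCrit d) d (n - 1)).2 / (xy (betaCrit d) d (n - 1)).1 ≥
        1 - Real.sqrt 6 * (d : ℝ) / Real.sqrt ((d : ℝ) ^ 2 - 1) / Real.sqrt n := by
  obtain ⟨m, rfl⟩ : ∃ m, n = m + 1 := ⟨n - 1, by omega⟩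
  have hd2 : (2 : ℝ) ≤ d := by exact_mod_cast hd
  have hw := one_lt_cothRatio hd m
  have hw0 := one_lt_cothRatio hd 0
  obtain ⟨hlo, hup⟩ := cothRatio_add_one_sq_bounds hd m
  have hr := one_sub_ratio_eq hd m
  rw [Nat.add_sub_cancel, one_sub_ratio_eq hd 0]
  have hN : (0 : ℝ) < Real.sqrt ((m + 1 : ℕ) : ℝ) := Real.sqrt_pos.2 (by positivity)
  have hN2 : Real.sqrt ((m + 1 : ℕ) : ℝ) ^ 2 = (m : ℝ) + 1 := by
    rw [Real.sq_sqrt (by positivity)]; push_cast; ring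
  have hS0 : 0 < (d : ℝ) ^ 2 - 1 := by nlinarith
  have hS := Real.sqrt_pos.2 hS0
  have hS2 := Real.sq_sqrt hS0.le
  have h62 := Real.sq_sqrt (by norm_num : (0 : ℝ) ≤ 6)
  rw [← hN2] at hlo hup
  generalize Real.sqrt ((m + 1 : ℕ) : ℝ) = N at *
  generalize Real.sqrt ((d : ℝ) ^ 2 - 1) = S at *
  constructor
  · have h : cothRatio d m + 1 ≤ (cothRatio d 0 + 1) * N := by
      refine (sq_le_sq₀ (by positivity) (by positivity)).1 ?_
      rw [mul_pow]; linarith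
    have : 2 / (cothRatio d 0 + 1) / N ≤ 2 / (cothRatio d m + 1) := by
      rw [div_div]
      exact div_le_div_of_nonneg_left (by norm_num) (by linarith) h
    linarith
  · have h : 2 * (S * N) ≤ Real.sqrt 6 * d * (cothRatio d m + 1) := by
      refine (sq_le_sq₀ (by positivity) (by positivity)).1 ?_
      rw [← hS2, ← mul_div_assoc, div_le_iff₀ (by positivity)] at hlo
      simp only [mul_pow, h62]
      linarith
    have : 2 / (cothRatio d m + 1) ≤ Real.sqrt 6 * d / S / N := by
      rw [div_div, div_le_div_iff₀ (by linarith) (by positivity)]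
      exact h
    linarith
end

section
/- Let d ≥ 2 be an integer, n ≥ 1 an integer, and k > 0 with k² ≤ n and k/√n < 1 − ((d−1)/(d+1))^d (which guarantees K^d_{√n}(k) > 0). Define f(z) = [(d+1)z + (d−1)]^d − [(d−1)z + (d+1)]^d + (k/√n)·[(d−1)z + (d+1)]^d. Then f(z) ≤ 0 for all z with 0 < z ≤ K^d_{√n}(k), and f(z) ≥ 0 for all z with K^d_{√n}(k) ≤ z < 1. -/
/-- `K^d_{√n}(k) = (−(d+1)(1 − k/√n)^{1/d} + (d−1)) / ((d−1)(1 − k/√n)^{1/d} − (d+1))`. -/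
noncomputable def Kfun (d n : ℕ) (k : ℝ) : ℝ :=
  (-((d : ℝ) + 1) * (1 - k / Real.sqrt n) ^ (1 / (d : ℝ)) + ((d : ℝ) - 1)) /
    (((d : ℝ) - 1) * (1 - k / Real.sqrt n) ^ (1 / (d : ℝ)) - ((d : ℝ) + 1))

/-- The auxiliary polynomial
`f(z) = ((d+1)z + (d−1))^d − ((d−1)z + (d+1))^d + (k/√n)·((d−1)z + (d+1))^d`. -/
noncomputable def fpoly (d : ℕ) (n : ℕ) (k : ℝ) (z : ℝ) : ℝ :=
  (((d : ℝ) + 1) * z + ((d : ℝ) - 1)) ^ d - (((d : ℝ) - 1) * z + ((d : ℝ) + 1)) ^ d +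
    k / Real.sqrt n * (((d : ℝ) - 1) * z + ((d : ℝ) + 1)) ^ d

/-- `f` factors through a difference of `d`-th powers. -/
theorem fpoly_eq_pow_sub_pow {d n : ℕ} {k r : ℝ} (hr : r ^ d = 1 - k / Real.sqrt n) (z : ℝ) :
    fpoly d n k z = (((d : ℝ) + 1) * z + ((d : ℝ) - 1)) ^ d -
      (r * (((d : ℝ) - 1) * z + ((d : ℝ) + 1))) ^ d := by
  rw [fpoly, mul_pow, hr]
  ring

/-- `K^d_{√n}(k)` is the only potentially positive zero of `f`: `f ≤ 0` on `(0, K^d_{√n}(k)]`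
and `f ≥ 0` on `[K^d_{√n}(k), 1)`, provided `k/√n < 1 − ((d−1)/(d+1))^d`
(which guarantees `K^d_{√n}(k) > 0`). -/
theorem fpoly_sign (d : ℕ) (hd : 2 ≤ d) (n : ℕ) (hn : 1 ≤ n) (k : ℝ) (hk : 0 < k)
    (hkn : k ^ 2 ≤ (n : ℝ))
    (hk' : k / Real.sqrt n < 1 - (((d : ℝ) - 1) / ((d : ℝ) + 1)) ^ d) :
    (∀ z : ℝ, 0 < z → z ≤ Kfun d n k → fpoly d n k z ≤ 0) ∧
      (∀ z : ℝ, Kfun d n k ≤ z → z < 1 → 0 ≤ fpoly d n k z) := by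
  have hd' : (2 : ℝ) ≤ d := by exact_mod_cast hd
  have hd0 : d ≠ 0 := by lia
  have hc : 0 < k / Real.sqrt n := div_pos hk (Real.sqrt_pos.2 (by exact_mod_cast hn))
  have hq : 0 ≤ ((d : ℝ) - 1) / ((d : ℝ) + 1) := div_nonneg (by linarith) (by linarith)
  have hs : 0 ≤ 1 - k / Real.sqrt n := by linarith [pow_nonneg hq d]
  set r : ℝ := (1 - k / Real.sqrt n) ^ (1 / (d : ℝ)) with hr
  have hr0 : 0 ≤ r := Real.rpow_nonneg hs _
  have hrd : r ^ d = 1 - k / Real.sqrt n := by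
    rw [hr, one_div, Real.rpow_inv_natCast_pow hs hd0]
  have hr1 : r < 1 := lt_of_pow_lt_pow_left₀ d zero_le_one (by rw [hrd, one_pow]; linarith)
  have hqr : ((d : ℝ) - 1) / ((d : ℝ) + 1) < r :=
    lt_of_pow_lt_pow_left₀ d hr0 (by rw [hrd]; linarith)
  rw [div_lt_iff₀ (by linarith)] at hqr
  have hden : 0 < ((d : ℝ) + 1) - ((d : ℝ) - 1) * r := by nlinarith
  have hK : Kfun d n k =
      (((d : ℝ) + 1) * r - ((d : ℝ) - 1)) / (((d : ℝ) + 1) - ((d : ℝ) - 1) * r) := by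
    rw [Kfun, ← hr, ← neg_div_neg_eq]
    ring
  have hKpos : 0 < Kfun d n k := by
    rw [hK]
    exact div_pos (by linarith) hden
  refine ⟨fun z hz hzK => ?_, fun z hzK _ => ?_⟩
  · rw [hK, le_div_iff₀ hden] at hzK
    rw [fpoly_eq_pow_sub_pow hrd, sub_nonpos]
    exact pow_le_pow_left₀ (by nlinarith) (by linarith) d
  · have hz : 0 < z := hKpos.trans_le hzK
    rw [hK, div_le_iff₀ hden] at hzK
    rw [fpoly_eq_pow_sub_pow hrd, sub_nonneg]
    exact pow_le_pow_left₀ (mul_nonneg hr0 (by nlinarith)) (by linarith) d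
end

section
/- Let d ≥ 2 be an integer and n an integer with n ≥ 6d²/(d²−1). Then K^d_{√n}(√6·d/√(d²−1)) ≤ 1 − (√6·d/√(d²−1))·(n−1)^{-1/2}. -/
/-- A function that vanishes at `0` and has nonnegative derivative on `(0, ∞)` is nonnegative
on `(0, ∞)`. -/
lemma nonneg_of_hasDerivAt_nonneg {f f' : ℝ → ℝ} (hf : ∀ x, HasDerivAt f (f' x) x)
    (h0 : f 0 = 0) (hf' : ∀ x, 0 < x → 0 ≤ f' x) {x : ℝ} (hx : 0 < x) : 0 ≤ f x := by
  have hmono : MonotoneOn f (Set.Ici 0) := by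
    refine monotoneOn_of_deriv_nonneg (convex_Ici 0)
      (fun y _ => (hf y).continuousAt.continuousWithinAt)
      (fun y _ => (hf y).differentiableAt.differentiableWithinAt) fun y hy => ?_
    rw [interior_Ici] at hy
    rw [(hf y).deriv]
    exact hf' y hy
  rw [← h0]
  exact hmono Set.self_mem_Ici hx.le hx.le

/-- The hyperbolic Huygens inequality. -/
lemma three_mul_le_two_mul_sinh_add_tanh {x : ℝ} (hx : 0 < x) :
    3 * x ≤ 2 * Real.sinh x + Real.sinh x / Real.cosh x := by
  have hder (y : ℝ) : HasDerivAt
      (fun y => 2 * Real.sinh y + Real.sinh y / Real.cosh y - 3 * y)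
      (2 * Real.cosh y + (Real.cosh y * Real.cosh y - Real.sinh y * Real.sinh y) /
        Real.cosh y ^ 2 - 3 * 1) y :=
    (((Real.hasDerivAt_sinh y).const_mul 2).add
      ((Real.hasDerivAt_sinh y).div (Real.hasDerivAt_cosh y) (Real.cosh_pos y).ne')).sub
      ((hasDerivAt_id y).const_mul 3)
  have := nonneg_of_hasDerivAt_nonneg hder (by simp) (fun y _ => by
    have hc := Real.cosh_pos y
    have e : 2 * Real.cosh y + (Real.cosh y * Real.cosh y - Real.sinh y * Real.sinh y) /
        Real.cosh y ^ 2 - 3 * 1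
        = (Real.cosh y - 1) ^ 2 * (2 * Real.cosh y + 1) / Real.cosh y ^ 2 := by
      field_simp
      linear_combination Real.cosh_sq y
    rw [e]
    positivity) hx
  linarith

/-- The hyperbolic Adamović–Mitrinović inequality. -/
lemma pow_three_mul_cosh_le_sinh_pow_three {x : ℝ} (hx : 0 < x) :
    x ^ 3 * Real.cosh x ≤ Real.sinh x ^ 3 := by
  have hder (y : ℝ) : HasDerivAt
      (fun y => Real.sinh y ^ 3 / Real.cosh y - y ^ 3)
      ((3 * Real.sinh y ^ 2 * Real.cosh y * Real.cosh y - Real.sinh y ^ 3 * Real.sinh y) /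
        Real.cosh y ^ 2 - 3 * y ^ 2) y := by
    have h1 : HasDerivAt (fun y => Real.sinh y ^ 3) (3 * Real.sinh y ^ 2 * Real.cosh y) y := by
      simpa using (Real.hasDerivAt_sinh y).fun_pow 3
    have h2 : HasDerivAt (fun y : ℝ => y ^ 3) (3 * y ^ 2) y := by
      simpa using hasDerivAt_pow 3 y
    exact (h1.div (Real.hasDerivAt_cosh y) (Real.cosh_pos y).ne').sub h2
  have := nonneg_of_hasDerivAt_nonneg hder (by simp) (fun y hy => by
    have hc := Real.cosh_pos y
    have hH := three_mul_le_two_mul_sinh_add_tanh hy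
    have e : (3 * Real.sinh y ^ 2 * Real.cosh y * Real.cosh y - Real.sinh y ^ 3 * Real.sinh y) /
        Real.cosh y ^ 2 - 3 * y ^ 2
        = 2 * Real.sinh y ^ 2 + (Real.sinh y / Real.cosh y) ^ 2 - 3 * y ^ 2 := by
      field_simp
      linear_combination Real.sinh y ^ 2 * Real.cosh_sq y
    rw [e]
    nlinarith [sq_nonneg (Real.sinh y - Real.sinh y / Real.cosh y),
      mul_self_le_mul_self (by positivity) hH]) hx
  rw [← le_div_iff₀ (Real.cosh_pos x)]
  linarith

lemma monotoneOn_inv_sinh_sq_sub_inv_sq :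
    MonotoneOn (fun x : ℝ => (Real.sinh x ^ 2)⁻¹ - (x ^ 2)⁻¹) (Set.Ioi 0) := by
  have hder (y : ℝ) (hy : 0 < y) : HasDerivAt
      (fun x : ℝ => (Real.sinh x ^ 2)⁻¹ - (x ^ 2)⁻¹)
      (-(2 * Real.sinh y * Real.cosh y) / (Real.sinh y ^ 2) ^ 2 - -(2 * y) / (y ^ 2) ^ 2) y := by
    have hs := Real.sinh_pos_iff.2 hy
    have h1 : HasDerivAt (fun y => Real.sinh y ^ 2) (2 * Real.sinh y * Real.cosh y) y := by
      simpa using (Real.hasDerivAt_sinh y).fun_pow 2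
    have h2 : HasDerivAt (fun y : ℝ => y ^ 2) (2 * y) y := by
      simpa using hasDerivAt_pow 2 y
    exact (h1.inv (by positivity)).sub (h2.inv (by positivity))
  refine monotoneOn_of_deriv_nonneg (convex_Ioi 0)
    (fun y hy => (hder y hy).continuousAt.continuousWithinAt)
    (fun y hy => (hder y (interior_subset hy)).differentiableAt.differentiableWithinAt)
    fun y hy => ?_
  rw [interior_Ioi] at hy
  have hy : 0 < y := hy
  have hs := Real.sinh_pos_iff.2 hy
  rw [(hder y hy).deriv]
  have e : -(2 * Real.sinh y * Real.cosh y) / (Real.sinh y ^ 2) ^ 2 - -(2 * y) / (y ^ 2) ^ 2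
      = 2 * (Real.sinh y ^ 3 - y ^ 3 * Real.cosh y) / (y ^ 3 * Real.sinh y ^ 3) := by
    field_simp
    ring
  rw [e]
  have := sub_nonneg.2 (pow_three_mul_cosh_le_sinh_pow_three hy)
  positivity

lemma inv_sq_le_inv_sinh_sq_add {x : ℝ} (hx : 0 < x) :
    (x ^ 2)⁻¹ ≤ (Real.sinh x ^ 2)⁻¹ + 1 / 3 := by
  have hs := Real.sinh_pos_iff.2 hx
  have hder (y : ℝ) : HasDerivAt
      (fun y => y - √3 * Real.sinh y / √(3 + Real.sinh y ^ 2))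
      (1 - (√3 * Real.cosh y * √(3 + Real.sinh y ^ 2) - √3 * Real.sinh y *
        (2 * Real.sinh y * Real.cosh y / (2 * √(3 + Real.sinh y ^ 2)))) /
        √(3 + Real.sinh y ^ 2) ^ 2) y := by
    have h1 : HasDerivAt (fun y => 3 + Real.sinh y ^ 2) (2 * Real.sinh y * Real.cosh y) y := by
      simpa using ((Real.hasDerivAt_sinh y).fun_pow 2).const_add 3
    exact (hasDerivAt_id y).sub (((Real.hasDerivAt_sinh y).const_mul √3).div
      (h1.sqrt (by positivity)) (by positivity))
  have h := nonneg_of_hasDerivAt_nonneg hder (by simp) (fun y _ => by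
    have hc := Real.cosh_pos y
    have hr : 0 < √(3 + Real.sinh y ^ 2) := by positivity
    have hr2 : √(3 + Real.sinh y ^ 2) ^ 2 = 3 + Real.sinh y ^ 2 := Real.sq_sqrt (by positivity)
    have h3 : √3 ^ 2 = 3 := Real.sq_sqrt (by norm_num)
    set r := √(3 + Real.sinh y ^ 2)
    have e : 1 - (√3 * Real.cosh y * r - √3 * Real.sinh y *
        (2 * Real.sinh y * Real.cosh y / (2 * r))) / r ^ 2
        = (r ^ 3 - 3 * √3 * Real.cosh y) / r ^ 3 := by
      field_simp
      linear_combination (-(√3 * Real.cosh y)) * hr2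
    rw [e]
    refine div_nonneg (sub_nonneg.2 ?_) (by positivity)
    refine le_of_abs_le (abs_le_of_sq_le_sq ?_ (by positivity))
    have e2 : (r ^ 3) ^ 2 - (3 * √3 * Real.cosh y) ^ 2
        = Real.sinh y ^ 4 * (9 + Real.sinh y ^ 2) := by
      have : (r ^ 3) ^ 2 = (3 + Real.sinh y ^ 2) ^ 3 := by rw [← hr2]; ring
      rw [this, mul_pow, mul_pow, h3, Real.cosh_sq]
      ring
    have : 0 ≤ Real.sinh y ^ 4 * (9 + Real.sinh y ^ 2) := by positivity
    linarith) hx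
  have h4 := pow_le_pow_left₀ (by positivity) (sub_nonneg.1 h) 2
  rw [div_pow, mul_pow, Real.sq_sqrt (by norm_num), Real.sq_sqrt (by positivity)] at h4
  calc (x ^ 2)⁻¹ ≤ (3 * Real.sinh x ^ 2 / (3 + Real.sinh x ^ 2))⁻¹ :=
        inv_anti₀ (by positivity) h4
    _ = (Real.sinh x ^ 2)⁻¹ + 1 / 3 := by field_simp

lemma coth_sq_sub_coth_div_sq_ge {x D : ℝ} (hx : 0 < x) (hD : 1 ≤ D) :
    2 / 3 * (1 - 1 / D ^ 2) ≤ (Real.cosh x / Real.sinh x) ^ 2 -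
      (Real.cosh (x / D) / (D * Real.sinh (x / D))) ^ 2 := by
  have hD0 : 0 < D := by linarith
  have hz : 0 < x / D := by positivity
  have hs := Real.sinh_pos_iff.2 hx
  have hsz := Real.sinh_pos_iff.2 hz
  have hmono := monotoneOn_inv_sinh_sq_sub_inv_sq (Set.mem_Ioi.2 hz) (Set.mem_Ioi.2 hx)
    (div_le_self hx.le hD)
  have hlow := inv_sq_le_inv_sinh_sq_add hx
  have e1 : (Real.cosh x / Real.sinh x) ^ 2 = 1 + (Real.sinh x ^ 2)⁻¹ := by
    rw [div_pow, Real.cosh_sq]; field_simp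
  have e2 : (Real.cosh (x / D) / (D * Real.sinh (x / D))) ^ 2
      = 1 / D ^ 2 * (1 + ((Real.sinh (x / D) ^ 2)⁻¹ - ((x / D) ^ 2)⁻¹)) + (x ^ 2)⁻¹ := by
    rw [div_pow, mul_pow, Real.cosh_sq]; field_simp; ring
  have hD1 : 1 / D ^ 2 ≤ 1 := by
    rw [div_le_one (by positivity)]; exact one_le_pow₀ hD
  have hDp : 0 ≤ 1 / D ^ 2 := by positivity
  rw [e1, e2]
  have := mul_le_mul_of_nonneg_left hmono hDp
  nlinarith [mul_nonneg (sub_nonneg.2 hD1) (sub_nonneg.2 hlow)]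

/-- For `t ∈ (0, 1]`, writing `1 - t = ((C - 1) / (C + 1))` and
`(1 - t) ^ (1 / D) = (D * A - 1) / (D * A + 1)`, the quantities `C` and `A` play the roles of
`coth x` and `coth (x / D) / D`. -/
lemma exists_coth_parametrization {t D : ℝ} (ht : 0 < t) (ht1 : t ≤ 1) (hD : 1 ≤ D) :
    ∃ A C : ℝ, 0 < A ∧ 0 < C ∧ t = 2 / (1 + C) ∧
      (1 - t) ^ (1 / D) = (D * A - 1) / (D * A + 1) ∧
      2 / 3 * (1 - 1 / D ^ 2) ≤ C ^ 2 - A ^ 2 := by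
  have hD0 : 0 < D := by linarith
  rcases ht1.eq_or_lt with rfl | hlt
  · refine ⟨1 / D, 1, by positivity, one_pos, by norm_num, ?_, ?_⟩
    · rw [sub_self, Real.zero_rpow (by positivity), mul_one_div_cancel hD0.ne']
      norm_num
    · have hD1 : 1 / D ^ 2 ≤ 1 := by
        rw [div_le_one (by positivity)]; exact one_le_pow₀ hD
      rw [div_pow]
      linarith
  · obtain ⟨x, hx⟩ : ∃ x, x = -Real.log (1 - t) / 2 := ⟨_, rfl⟩
    have hx0 : 0 < x := by
      have := Real.log_neg (by linarith : 0 < 1 - t) (by linarith)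
      linarith
    have hexp : 1 - t = Real.exp (-x - x) := by
      rw [← Real.exp_log (by linarith : 0 < 1 - t)]
      congr 1
      linarith
    have key (z : ℝ) (hz : 0 < z) : Real.exp (-z - z)
        = (Real.cosh z / Real.sinh z - 1) / (Real.cosh z / Real.sinh z + 1) := by
      have hs := Real.sinh_pos_iff.2 hz
      have hc := Real.cosh_pos z
      rw [Real.exp_sub, ← Real.cosh_sub_sinh, ← Real.cosh_add_sinh]
      field_simp
    have hz : 0 < x / D := by positivity
    have hs := Real.sinh_pos_iff.2 hx0
    have hsz := Real.sinh_pos_iff.2 hz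
    have hc := Real.cosh_pos x
    have hcz := Real.cosh_pos (x / D)
    refine ⟨Real.cosh (x / D) / (D * Real.sinh (x / D)), Real.cosh x / Real.sinh x,
      by positivity, by positivity, ?_, ?_, coth_sq_sub_coth_div_sq_ge hx0 hD⟩
    · have := key x hx0
      rw [← hexp] at this
      rw [← sub_sub_cancel 1 t, this]
      field_simp
      ring
    · have e : D * (Real.cosh (x / D) / (D * Real.sinh (x / D)))
          = Real.cosh (x / D) / Real.sinh (x / D) := by field_simp
      rw [e, ← key _ hz, hexp, ← Real.exp_mul]
      congr 1
      ring


/-- **Upper bound on `K`**: for `d ≥ 2` and `n ≥ 6d²/(d²−1)`,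
`K^d_{√n}(√6·d/√(d²−1)) ≤ 1 − (√6·d/√(d²−1))·(n−1)^{-1/2}`. -/
theorem Kfun_upper_bound (d : ℕ) (hd : 2 ≤ d) (n : ℕ)
    (hn : 6 * (d : ℝ) ^ 2 / ((d : ℝ) ^ 2 - 1) ≤ (n : ℝ)) :
    Kfun d n (Real.sqrt 6 * (d : ℝ) / Real.sqrt ((d : ℝ) ^ 2 - 1)) ≤
      1 - Real.sqrt 6 * (d : ℝ) / Real.sqrt ((d : ℝ) ^ 2 - 1) / Real.sqrt ((n : ℝ) - 1) := by
  have hd' : (2 : ℝ) ≤ d := by exact_mod_cast hd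
  have hq : (0 : ℝ) < (d : ℝ) ^ 2 - 1 := by nlinarith
  set k := √6 * (d : ℝ) / √((d : ℝ) ^ 2 - 1) with hk
  have hk0 : 0 < k := by positivity
  have hk2 : k ^ 2 = 6 * (d : ℝ) ^ 2 / ((d : ℝ) ^ 2 - 1) := by
    rw [hk, div_pow, mul_pow, Real.sq_sqrt (by norm_num), Real.sq_sqrt hq.le]
  rw [← hk2] at hn
  have hn0 : (0 : ℝ) < n := lt_of_lt_of_le (by positivity) hn
  have hrn : 0 < √(n : ℝ) := Real.sqrt_pos.2 hn0
  obtain ⟨A, C, hA, hC, htC, hpow, hAC⟩ := exists_coth_parametrization (t := k / √n) (D := d)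
    (by positivity) ((div_le_one hrn).2 (Real.le_sqrt_of_sq_le hn)) (by linarith)
  have hK : Kfun d n k = 1 - 2 / (1 + A) := by
    have hne : ((d : ℝ) - 1) * ((d * A - 1) / (d * A + 1)) - (d + 1) ≠ 0 := by
      have e : ((d : ℝ) - 1) * ((d * A - 1) / (d * A + 1)) - (d + 1)
          = -(2 * d * (1 + A)) / (d * A + 1) := by
        field_simp
        ring
      rw [e]
      exact div_ne_zero (neg_ne_zero.2 (by positivity)) (by positivity)
    rw [Kfun, hpow, div_eq_iff hne]
    field_simp
    ring
  have hn_eq : (n : ℝ) = k ^ 2 * (1 + C) ^ 2 / 4 := by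
    have h1 : k * (1 + C) = 2 * √n := by
      rwa [div_eq_div_iff hrn.ne' (by positivity)] at htC
    have h2 := Real.sq_sqrt hn0.le
    linear_combination (-(k * (1 + C) + 2 * √n) / 4) * h1 - h2
  have hAC' : A ≤ C := by
    refine le_of_abs_le (abs_le_of_sq_le_sq ?_ hC.le)
    have : 1 / (d : ℝ) ^ 2 ≤ 1 := by
      rw [div_le_one (by positivity)]
      linarith
    linarith
  have hkinv : k ^ 2 * (2 / 3 * (1 - 1 / (d : ℝ) ^ 2)) = 4 := by
    rw [hk2]
    field_simp
    ring
  have hle : (k * (1 + A) / 2) ^ 2 ≤ n - 1 := by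
    rw [hn_eq]
    nlinarith [mul_le_mul_of_nonneg_left
      (show 2 / 3 * (1 - 1 / (d : ℝ) ^ 2) ≤ (1 + C) ^ 2 - (1 + A) ^ 2 by linarith)
      (sq_nonneg k)]
  rw [hK]
  refine sub_le_sub_left ?_ 1
  calc k / √((n : ℝ) - 1) ≤ k / (k * (1 + A) / 2) :=
        div_le_div_of_nonneg_left hk0.le (by positivity) (Real.le_sqrt_of_sq_le hle)
    _ = 2 / (1 + A) := by field_simp
end

section
/- For every integer d ≥ 2 and every real r ≥ 1, the function F_d(r) = 2·√(d²(6r² − 1) + 1)·((1 − 1/r)^{1/d} − 1) + √6·((−d + 1)(1 − 1/r)^{1/d} + (d + 1)) satisfies F_d(r) ≤ 0. -/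
open Set in
/-- A function with nonnegative derivative on `(0, ∞)` is monotone there. -/
lemma monotoneOn_Ioi_of_hasDerivAt_nonneg {f f' : ℝ → ℝ}
    (h : ∀ x, 0 < x → HasDerivAt f (f' x) x) (h' : ∀ x, 0 < x → 0 ≤ f' x) :
    MonotoneOn f (Ioi 0) := by
  refine monotoneOn_of_hasDerivWithinAt_nonneg (f' := f') (convex_Ioi 0)
    (fun x hx ↦ (h x hx).continuousAt.continuousWithinAt) ?_ ?_
  · intro x hx
    rw [interior_Ioi] at hx
    exact (h x hx).hasDerivWithinAt
  · intro x hx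
    rw [interior_Ioi] at hx
    exact h' x hx

lemma Real.self_le_sinh_mul_cosh {x : ℝ} (hx : 0 ≤ x) : x ≤ sinh x * cosh x := by
  nlinarith [self_le_sinh_iff.2 hx, one_le_cosh x]

lemma Real.mul_cosh_le_sinh_add {x : ℝ} (hx : 0 ≤ x) :
    x * cosh x ≤ sinh x + sinh x ^ 3 / 3 := by
  have hmono : MonotoneOn (fun y ↦ sinh y + sinh y ^ 3 / 3 - y * cosh y) (Set.Ici 0) := by
    refine monotoneOn_of_hasDerivWithinAt_nonneg
      (f' := fun y ↦ sinh y * (sinh y * cosh y - y)) (convex_Ici 0) (by fun_prop) ?_ ?_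
    · intro y _
      have h := ((hasDerivAt_sinh y).add (((hasDerivAt_sinh y).pow 3).div_const 3)).sub
        ((hasDerivAt_id y).mul (hasDerivAt_cosh y))
      refine HasDerivAt.hasDerivWithinAt (h.congr_deriv ?_)
      simp
      ring
    · intro y hy
      rw [interior_Ici] at hy
      exact mul_nonneg (sinh_nonneg_iff.2 hy.le) (sub_nonneg.2 (self_le_sinh_mul_cosh hy.le))
  have := hmono (Set.self_mem_Ici) hx hx
  simp at this
  linarith

/-- `x coth x` is increasing on `(0, ∞)`. -/
lemma Real.monotoneOn_mul_coth :
    MonotoneOn (fun x ↦ x * (cosh x / sinh x)) (Set.Ioi 0) := by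
  refine monotoneOn_Ioi_of_hasDerivAt_nonneg
    (f' := fun x ↦ (sinh x * cosh x - x) / sinh x ^ 2) (fun x hx ↦ ?_) (fun x hx ↦ ?_)
  · have hs : sinh x ≠ 0 := (sinh_pos_iff.2 hx).ne'
    refine ((hasDerivAt_id x).mul ((hasDerivAt_cosh x).div (hasDerivAt_sinh x) hs)).congr_deriv ?_
    simp only [id, Pi.div_apply]
    field_simp
    linear_combination (-x) * cosh_sq x
  · exact div_nonneg (sub_nonneg.2 (self_le_sinh_mul_cosh hx.le)) (sq_nonneg _)

/-- `x² (coth² x - 2/3)` is increasing on `(0, ∞)`. -/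
lemma Real.monotoneOn_sq_mul_coth_sq_sub :
    MonotoneOn (fun x ↦ x ^ 2 * ((cosh x / sinh x) ^ 2 - 2 / 3)) (Set.Ioi 0) := by
  refine monotoneOn_Ioi_of_hasDerivAt_nonneg
    (f' := fun x ↦ 2 * x * (sinh x + sinh x ^ 3 / 3 - x * cosh x) / sinh x ^ 3)
    (fun x hx ↦ ?_) (fun x hx ↦ ?_)
  · have hs : sinh x ≠ 0 := (sinh_pos_iff.2 hx).ne'
    refine (((hasDerivAt_id x).pow 2).mul
      ((((hasDerivAt_cosh x).div (hasDerivAt_sinh x) hs).pow 2).sub_const (2 / 3))).congr_deriv ?_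
    simp only [id, Pi.div_apply, Pi.pow_apply]
    field_simp
    push_cast
    ring_nf
    have h4 : cosh x ^ 3 = cosh x * (sinh x ^ 2 + 1) := by rw [← cosh_sq]; ring
    rw [h4, cosh_sq]
    field_simp
    ring
  · have := sinh_pos_iff.2 hx
    have := sub_nonneg.2 (mul_cosh_le_sinh_add hx.le)
    positivity

lemma Real.cosh_div_sinh_eq {x : ℝ} (hx : 0 < x) :
    cosh x / sinh x = (1 + exp (-2 * x)) / (1 - exp (-2 * x)) := by
  have hs : sinh x ≠ 0 := (sinh_pos_iff.2 hx).ne'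
  have hlt : exp (-2 * x) < 1 := exp_lt_one_iff.2 (by linarith)
  have h2 : exp (-2 * x) = exp (-x) ^ 2 := by rw [← exp_nat_mul]; push_cast; ring_nf
  have h1 : exp x * exp (-x) = 1 := by rw [← exp_add]; simp
  rw [div_eq_div_iff hs (by linarith), h2, cosh_eq, sinh_eq]
  linear_combination (-exp (-x)) * h1

/-- For every integer `d ≥ 2` and real `r ≥ 1`,
`F_d(r) = 2√(d²(6r² − 1) + 1)·((1 − 1/r)^{1/d} − 1) + √6·((−d+1)(1 − 1/r)^{1/d} + (d+1)) ≤ 0`. -/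
theorem F_nonpos (d : ℕ) (hd : 2 ≤ d) (r : ℝ) (hr : 1 ≤ r) :
    2 * Real.sqrt ((d : ℝ) ^ 2 * (6 * r ^ 2 - 1) + 1) *
          ((1 - 1 / r) ^ (1 / (d : ℝ)) - 1) +
        Real.sqrt 6 * ((-(d : ℝ) + 1) * (1 - 1 / r) ^ (1 / (d : ℝ)) + ((d : ℝ) + 1)) ≤ 0 := by
  have hd' : (2 : ℝ) ≤ d := by exact_mod_cast hd
  have key : ∀ {A B : ℝ}, 0 ≤ B → 6 * B ^ 2 ≤ 4 * A → √6 * B ≤ 2 * √A := by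
    intro A B hB h
    have hA : 0 ≤ A := by nlinarith [sq_nonneg B]
    refine abs_le_of_sq_le_sq' ?_ (by positivity) |>.2
    rw [mul_pow, mul_pow, Real.sq_sqrt hA, Real.sq_sqrt (by norm_num)]
    linarith
  rcases hr.eq_or_lt with rfl | hr
  · have h0 : (1 - 1 / (1 : ℝ)) ^ (1 / (d : ℝ)) = 0 := by
      rw [div_one, sub_self, Real.zero_rpow (by positivity)]
    have := key (A := (d : ℝ) ^ 2 * (6 * 1 ^ 2 - 1) + 1) (B := d + 1) (by positivity)
      (by nlinarith)
    rw [h0]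
    linarith
  · have hp0 : 0 < 1 - 1 / r := by
      rw [sub_pos, div_lt_one (by linarith)]
      exact hr
    have hp1 : 1 - 1 / r < 1 := by
      have : 0 < 1 / r := by positivity
      linarith
    obtain ⟨t, ht⟩ : ∃ t, t = -Real.log (1 - 1 / r) / (2 * d) := ⟨_, rfl⟩
    have ht0 : 0 < t := by
      rw [ht]
      exact div_pos (neg_pos.2 (Real.log_neg hp0 hp1)) (by positivity)
    have hle : t ≤ d * t := by nlinarith
    have hdt0 : 0 < d * t := ht0.trans_le hle
    have hp : 1 - 1 / r = Real.exp (-2 * (d * t)) := by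
      rw [ht, ← Real.exp_log hp0, Real.log_exp]
      congr 1
      field_simp
    have hs : (1 - 1 / r) ^ (1 / (d : ℝ)) = Real.exp (-2 * t) := by
      rw [hp, ← Real.exp_mul]
      congr 1
      field_simp
    have hc := Real.cosh_div_sinh_eq ht0
    have hC := Real.cosh_div_sinh_eq hdt0
    have m1 := Real.monotoneOn_mul_coth ht0 hdt0 hle
    have m2 := Real.monotoneOn_sq_mul_coth_sq_sub ht0 hdt0 hle
    simp only [hc, hC, ← hp] at m1 m2
    rw [hs]
    have hs1 : Real.exp (-2 * t) < 1 := Real.exp_lt_one_iff.2 (by linarith)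
    have hs0 := Real.exp_pos (-2 * t)
    generalize Real.exp (-2 * t) = s at *
    have hrC : (1 + (1 - 1 / r)) / (1 - (1 - 1 / r)) = 2 * r - 1 := by
      field_simp
      ring
    rw [hrC] at m1 m2
    obtain ⟨c, hcs⟩ : ∃ c, c = (1 + s) / (1 - s) := ⟨_, rfl⟩
    have hs' : 0 < 1 - s := by linarith
    have hcs' : c * (1 - s) = 1 + s := by rw [hcs]; field_simp
    have hc0 : 0 ≤ c := by rw [hcs]; positivity
    rw [← hcs] at m1 m2
    have m1' : c ≤ d * (2 * r - 1) := le_of_mul_le_mul_left (by linarith) ht0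
    have m2' : c ^ 2 - 2 / 3 ≤ d ^ 2 * ((2 * r - 1) ^ 2 - 2 / 3) :=
      le_of_mul_le_mul_left (by linarith) (pow_pos ht0 2)
    have := key (A := (d : ℝ) ^ 2 * (6 * r ^ 2 - 1) + 1) (B := d + c) (by positivity)
      (by nlinarith)
    have := mul_le_mul_of_nonneg_right this hs'.le
    linear_combination this - √6 * hcs'
end

section
/- For every integer d ≥ 2 and every integer n ≥ 2, at the critical inverse temperature β = β_c = arctanh(1/d) the inequality K^d_{√n}(1 − y_0/x_0) ≥ 1 − (1 − y_0/x_0)·(n−1)^{-1/2} holds, where x_0 = (e^{β_c(d+1)} + e^{−β_c(d+1)})^d and y_0 = (e^{β_c(d−1)} + e^{−β_c(d−1)})^d. -/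
/-- `x_0 = (e^{β_c(d+1)} + e^{−β_c(d+1)})^d` at criticality. -/
noncomputable def xzero (d : ℕ) : ℝ :=
  (Real.exp (betaCrit d * ((d : ℝ) + 1)) + Real.exp (-betaCrit d * ((d : ℝ) + 1))) ^ d

/-- `y_0 = (e^{β_c(d−1)} + e^{−β_c(d−1)})^d` at criticality. -/
noncomputable def yzero (d : ℕ) : ℝ :=
  (Real.exp (betaCrit d * ((d : ℝ) - 1)) + Real.exp (-betaCrit d * ((d : ℝ) - 1))) ^ d

/-- `e^{2y} ≤ (1+y)/(1-y)`, i.e. `y ≤ artanh y`. -/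
lemma one_sub_div_one_add_le_exp {y : ℝ} (h0 : 0 ≤ y) (h1 : y < 1) :
    (1 - y) / (1 + y) ≤ Real.exp (-(2 * y)) := by
  have hs := Real.hasSum_log_sub_log_of_abs_lt_one (abs_lt.2 ⟨by linarith, h1⟩)
  have h := le_hasSum hs 0 fun j _ => by positivity
  norm_num at h
  rw [← Real.log_le_iff_le_exp (div_pos (by linarith) (by linarith)),
    Real.log_div (by linarith) (by linarith)]
  linarith

lemma div_sqrt_le_of_sub_one {m k : ℝ} (hm : 2 ≤ m) (h0 : 0 ≤ k) (h1 : k ≤ 1) :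
    k / √m ≤ 4 * (k / √(m - 1)) / (4 + (k / √(m - 1)) ^ 2) := by
  have hq : 0 < √m := Real.sqrt_pos.2 (by linarith)
  have hp : 0 < √(m - 1) := Real.sqrt_pos.2 (by linarith)
  have hq2 : √m ^ 2 = m := Real.sq_sqrt (by linarith)
  have hp2 : √(m - 1) ^ 2 = m - 1 := Real.sq_sqrt (by linarith)
  generalize √m = q at *
  generalize √(m - 1) = p at *
  have key : 4 * p ^ 2 + k ^ 2 ≤ 4 * (p * q) := by
    have : 4 * p ^ 2 + 1 ≤ 4 * (p * q) := by
      refine le_of_abs_le (abs_le_of_sq_le_sq ?_ (by positivity))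
      have : (4 * (p * q)) ^ 2 = 16 * (p ^ 2 * q ^ 2) := by ring
      rw [this, hp2, hq2]
      nlinarith
    nlinarith
  have e : 4 * (k / p) / (4 + (k / p) ^ 2) = k * (4 * p / (4 * p ^ 2 + k ^ 2)) := by
    field_simp
  rw [e, div_eq_mul_inv]
  refine mul_le_mul_of_nonneg_left ?_ h0
  rw [inv_eq_one_div, div_le_div_iff₀ hq (by positivity)]
  linarith

/-- The quadratic Taylor bound for `exp` at `2w/(2-w)`. -/
lemma exp_neg_le_one_sub {w : ℝ} (h0 : 0 ≤ w) (h1 : w < 2) :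
    Real.exp (-(2 * w / (2 - w))) ≤ 1 - 4 * w / (4 + w ^ 2) := by
  have hw : 0 < 2 - w := by linarith
  have h := Real.quadratic_le_exp_of_nonneg (x := 2 * w / (2 - w)) (by positivity)
  have e : 1 + 2 * w / (2 - w) + (2 * w / (2 - w)) ^ 2 / 2 = (4 + w ^ 2) / (2 - w) ^ 2 := by
    field_simp
    ring
  have e' : 1 - 4 * w / (4 + w ^ 2) = ((4 + w ^ 2) / (2 - w) ^ 2)⁻¹ := by
    field_simp
    ring
  rw [Real.exp_neg, e', ← e]
  exact inv_anti₀ (by positivity) h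

lemma Kfun_ge {d n : ℕ} (hd : 2 ≤ d) (hn : 2 ≤ n) {k : ℝ} (h0 : 0 ≤ k) (h1 : k ≤ 1) :
    1 - k / √((n : ℝ) - 1) ≤ Kfun d n k := by
  have hd' : (2 : ℝ) ≤ d := by exact_mod_cast hd
  have hn' : (2 : ℝ) ≤ n := by exact_mod_cast hn
  have hw0 : 0 ≤ k / √((n : ℝ) - 1) := by positivity
  have hw1 : k / √((n : ℝ) - 1) ≤ 1 :=
    div_le_one_of_le₀ (h1.trans (Real.one_le_sqrt.2 (by linarith))) (Real.sqrt_nonneg _)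
  have ht0 : 0 ≤ k / √(n : ℝ) := by positivity
  have ht := div_sqrt_le_of_sub_one hn' h0 h1
  unfold Kfun
  generalize k / √((n : ℝ) - 1) = w at *
  generalize k / √(n : ℝ) = t at *
  have hexp := (exp_neg_le_one_sub hw0 (by linarith)).trans (sub_le_sub_left ht 1)
  have h2w : 0 < 2 - w := by linarith
  set y := w / (d * (2 - w)) with hy
  have hy0 : 0 ≤ y := by positivity
  have hy1 : y < 1 := by
    rw [hy, div_lt_one (by positivity)]
    nlinarith
  have hpow : ((1 - y) / (1 + y)) ^ d ≤ 1 - t := by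
    calc ((1 - y) / (1 + y)) ^ d ≤ Real.exp (-(2 * y)) ^ d :=
          pow_le_pow_left₀ (div_nonneg (by linarith) (by linarith))
            (one_sub_div_one_add_le_exp hy0 hy1) d
      _ = Real.exp (-(2 * w / (2 - w))) := by
          rw [← Real.exp_nat_mul, hy]
          congr 1
          field_simp
      _ ≤ 1 - t := hexp
  have ht1 : 0 ≤ 1 - t := (Real.exp_pos _).le.trans hexp
  have hs : (1 - y) / (1 + y) ≤ (1 - t) ^ (1 / (d : ℝ)) := by
    rw [one_div]
    refine (Real.le_rpow_inv_iff_of_pos (div_nonneg (by linarith) (by linarith)) ht1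
      (by linarith)).2 ?_
    rwa [Real.rpow_natCast]
  have hs1 : (1 - t) ^ (1 / (d : ℝ)) ≤ 1 :=
    Real.rpow_le_one ht1 (by linarith) (by positivity)
  generalize (1 - t) ^ (1 / (d : ℝ)) = s at *
  have hden : 0 < 2 * d - w * (d - 1) := by nlinarith
  have e : (1 - y) / (1 + y) = (2 * d - w * (d + 1)) / (2 * d - w * (d - 1)) := by
    have : d * (2 - w) + w ≠ 0 := by positivity
    have h1y : 1 + y ≠ 0 := by positivity
    rw [div_eq_div_iff h1y hden.ne', hy]
    field_simp
    ring
  rw [e, div_le_iff₀ hden] at hs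
  have hneg : ((d : ℝ) - 1) * s - (d + 1) < 0 := by nlinarith
  rw [le_div_iff_of_neg hneg]
  linarith

lemma betaCrit_nonneg {d : ℕ} (hd : 2 ≤ d) : 0 ≤ betaCrit d := by
  have hd' : (2 : ℝ) ≤ d := by exact_mod_cast hd
  refine mul_nonneg (by norm_num) (Real.log_nonneg ?_)
  rw [one_le_div (by linarith)]
  linarith

lemma xzero_pos (d : ℕ) : 0 < xzero d := by
  unfold xzero
  positivity

lemma yzero_nonneg (d : ℕ) : 0 ≤ yzero d := by
  unfold yzero
  positivity

lemma yzero_le_xzero {d : ℕ} (hd : 2 ≤ d) : yzero d ≤ xzero d := by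
  have hd' : (2 : ℝ) ≤ d := by exact_mod_cast hd
  have hb := betaCrit_nonneg hd
  refine pow_le_pow_left₀ (by positivity) ?_ d
  have h : Real.cosh (betaCrit d * (d - 1)) ≤ Real.cosh (betaCrit d * (d + 1)) := by
    rw [Real.cosh_le_cosh, abs_of_nonneg (mul_nonneg hb (by linarith)),
      abs_of_nonneg (mul_nonneg hb (by linarith))]
    exact mul_le_mul_of_nonneg_left (by linarith) hb
  rw [Real.cosh_eq, Real.cosh_eq] at h
  simp only [neg_mul]
  linarith

/-- **Lower bound on `K` at `k = 1 − y_0/x_0`**: for all `d ≥ 2` and `n ≥ 2`,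
`K^d_{√n}(1 − y_0/x_0) ≥ 1 − (1 − y_0/x_0)·(n−1)^{-1/2}`. -/
theorem Kfun_lower_bound_at_y0x0 (d : ℕ) (hd : 2 ≤ d) (n : ℕ) (hn : 2 ≤ n) :
    Kfun d n (1 - yzero d / xzero d) ≥
      1 - (1 - yzero d / xzero d) / Real.sqrt ((n : ℝ) - 1) := by
  exact Kfun_ge hd hn
    (sub_nonneg.2 (div_le_one_of_le₀ (yzero_le_xzero hd) (xzero_pos d).le))
    (sub_le_self _ (div_nonneg (yzero_nonneg d) (xzero_pos d).le))
end

section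
/- For every integer d ≥ 2, every real k with 0 < k < 1, and every real n ≥ 1, the function Q_{d,k}(n) = (d(k − 2√(n−1)) − k)·(((√n − k)/√n)^{1/d} − 1) − 2k satisfies Q_{d,k}(n) ≤ 0. -/
/-- `Q_{d,k}(n) = (d(k − 2√(n−1)) − k)·(((√n − k)/√n)^{1/d} − 1) − 2k`. -/
noncomputable def Qfun (d : ℕ) (k : ℝ) (n : ℝ) : ℝ :=
  ((d : ℝ) * (k - 2 * Real.sqrt (n - 1)) - k) *
      (((Real.sqrt n - k) / Real.sqrt n) ^ (1 / (d : ℝ)) - 1) -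
    2 * k

/-- A Padé-type upper bound for `1 - (1 - x) ^ a` when `0 ≤ a` and `0 ≤ x < 1`. -/
theorem mul_one_sub_one_sub_rpow_le {a x : ℝ} (ha0 : 0 ≤ a) (hx0 : 0 ≤ x) (hx1 : x < 1) :
    (2 - x ^ 2 - (1 - a) * x) * (1 - (1 - x) ^ a) ≤ 2 * a * x := by
  have hD : ∀ t ∈ Set.Icc 0 x, 0 < 2 - t ^ 2 - (1 - a) * t := by
    rintro t ⟨ht0, htx⟩
    nlinarith [mul_nonneg ha0 ht0]
  have hder : ∀ t ∈ Set.Icc 0 x,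
      HasDerivAt (fun t : ℝ => (1 - 2 * a * t / (2 - t ^ 2 - (1 - a) * t)) * (1 - t) ^ (-a))
        (a * (1 - t) ^ (-a - 1) / (2 - t ^ 2 - (1 - a) * t) ^ 2 *
          ((2 - t ^ 2 - (1 - a) * t - 2 * a * t) * (2 - t ^ 2 - (1 - a) * t) -
            2 * (2 + t ^ 2) * (1 - t))) t := by
    intro t ht
    have hDt := (hD t ht).ne'
    have h1t : 0 < 1 - t := by linarith [ht.2]
    have hden : HasDerivAt (fun t : ℝ => 2 - t ^ 2 - (1 - a) * t) (-(2 * t) - (1 - a)) t :=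
      (((hasDerivAt_pow 2 t).const_sub 2).sub
        ((hasDerivAt_id t).const_mul (1 - a))).congr_deriv (by simp)
    have hnum : HasDerivAt (fun t : ℝ => 2 * a * t) (2 * a) t := by
      simpa using (hasDerivAt_id t).const_mul (2 * a)
    have hpow : HasDerivAt (fun t : ℝ => (1 - t) ^ (-a)) (a * (1 - t) ^ (-a - 1)) t :=
      (((hasDerivAt_id t).const_sub 1).rpow_const (p := -a)
        (Or.inl h1t.ne')).congr_deriv (by simp)
    refine (((hnum.div hden hDt).const_sub 1).mul hpow).congr_deriv ?_
    have hsplit : (1 - t) ^ (-a) = (1 - t) ^ (-a - 1) * (1 - t) := by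
      rw [Real.rpow_sub_one h1t.ne', div_mul_cancel₀ _ h1t.ne']
    rw [hsplit]
    simp only [Pi.div_apply]
    generalize hDe : 2 - t ^ 2 - (1 - a) * t = D at hDt ⊢
    field_simp
    rw [← hDe]
    ring
  have hanti := antitoneOn_of_deriv_nonpos (convex_Icc 0 x)
    (fun t ht => (hder t ht).continuousAt.continuousWithinAt)
    (fun t ht => (hder t (interior_subset ht)).differentiableAt.differentiableWithinAt)
    (fun t ht => by
      have ht := interior_subset ht
      have h1t : 0 < 1 - t := by linarith [ht.2]
      rw [(hder t ht).deriv]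
      refine mul_nonpos_of_nonneg_of_nonpos (by positivity) ?_
      have h : 0 ≤ (1 - t) * (t ^ 2 * (5 + t)) :=
        mul_nonneg h1t.le (mul_nonneg (sq_nonneg t) (by linarith [ht.1]))
      nlinarith [sq_nonneg (a * t)])
  have hle := hanti (Set.left_mem_Icc.2 hx0) (Set.right_mem_Icc.2 hx0) hx0
  have hDx := hD x (Set.right_mem_Icc.2 hx0)
  have h1x : 0 < 1 - x := by linarith
  simp only [mul_zero, zero_div, sub_zero, Real.one_rpow, mul_one] at hle
  rw [Real.rpow_neg h1x.le, ← div_eq_mul_inv, div_le_one (Real.rpow_pos_of_pos h1x a),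
    sub_le_comm, le_div_iff₀ hDx] at hle
  linarith

/-- For every integer `d ≥ 2`, `0 < k < 1` and real `n ≥ 1`, `Q_{d,k}(n) ≤ 0`. -/
theorem Qfun_nonpos (d : ℕ) (hd : 2 ≤ d) (k : ℝ) (hk0 : 0 < k) (hk1 : k < 1)
    (n : ℝ) (hn : 1 ≤ n) :
    Qfun d k n ≤ 0 := by
  have hd0 : (0 : ℝ) < d := by positivity
  have hs1 : 1 ≤ √n := Real.one_le_sqrt.2 hn
  have hs0 : 0 < √n := by linarith
  have hs2 : √n ^ 2 = n := Real.sq_sqrt (by linarith)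
  unfold Qfun
  set s := √n
  obtain ⟨x, hx⟩ : ∃ x, x = k / s := ⟨_, rfl⟩
  have hk : k = s * x := by rw [hx]; field_simp
  have hx0 : 0 ≤ x := by rw [hx]; positivity
  have hx1 : x < 1 := by rw [hx, div_lt_one hs0]; linarith
  have hbase : (s - k) / s = 1 - x := by rw [hx]; field_simp
  have hr : √(n - 1) ≤ s - k * x / 2 := by
    refine Real.sqrt_le_iff.2 ⟨by nlinarith, ?_⟩
    have hsk : s * x * k = k ^ 2 := by rw [← hk]; ring
    nlinarith [sq_nonneg (k * x)]
  have hmain := mul_one_sub_one_sub_rpow_le (a := 1 / (d : ℝ)) (by positivity) hx0 hx1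
  have hu : 0 ≤ 1 - (1 - x) ^ (1 / (d : ℝ)) :=
    sub_nonneg.2 (Real.rpow_le_one (by linarith) (by linarith) (by positivity))
  rw [hbase]
  set u := 1 - (1 - x) ^ (1 / (d : ℝ)) with hu_def
  have hscaled : s * ((2 * d - d * x ^ 2 - (d - 1) * x) * u) ≤ s * (2 * x) := by
    refine mul_le_mul_of_nonneg_left ?_ hs0.le
    have h := mul_le_mul_of_nonneg_left hmain hd0.le
    field_simp at h
    linarith
  have hmono := mul_le_mul_of_nonneg_left hr (mul_nonneg (mul_nonneg zero_le_two hd0.le) hu)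
  have hpow : (1 - x) ^ (1 / (d : ℝ)) - 1 = -u := by rw [hu_def]; ring
  rw [hpow]
  subst hk
  linarith
end
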